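/- For the particular weighting vector w* ∈ ℝ^P defined by w*_p := ‖b_p‖_*^{-1} / Σ_{l∈[P]} ‖b_l‖_*^{-1}, the Strengthened Linear Approximation with κ = 𝟙 := (1,…,1) and the worst-case CVaR approximation have the same x-feasible region: X_SLA(𝟙) = X_WCVaR(w*). -/

import Mathlib

theorem aux_bdd {E : Type*} [AddCommGroup E] [Module ℝ E] [FiniteDimensional ℝ E]
    (nrm : E → ℝ)
    (h0 : ∀ u : E, nrm u = 0 ↔ u = 0)
    (hs : ∀ (c : ℝ) (u : E), nrm (c • u) = |c| * nrm u)
    (ht : ∀ u w : E, nrm (u + w) ≤ nrm u + nrm w) (g : E →ₗ[ℝ] ℝ) :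
    ∃ C : ℝ, 0 ≤ C ∧ ∀ u, g u ≤ C * nrm u := by
  have hneg : ∀ u, nrm (-u) = nrm u := by
    intro u
    have := hs (-1) u
    simpa using this
  have hnn : ∀ u, 0 ≤ nrm u := by
    intro u
    have h1 := ht u (-u)
    have h2 : nrm (u + -u) = 0 := by rw [h0]; simp
    rw [h2, hneg] at h1
    linarith
  letI : Norm E := ⟨nrm⟩
  have core : NormedSpace.Core ℝ E :=
    { norm_nonneg := hnn
      norm_smul := fun c u => by rw [Real.norm_eq_abs]; exact hs c u
      norm_triangle := ht
      norm_eq_zero_iff := h0 }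
  letI : NormedAddCommGroup E := NormedAddCommGroup.ofCore core
  letI : NormedSpace ℝ E := NormedSpace.ofCore core
  let G := LinearMap.toContinuousLinearMap g
  refine ⟨‖G‖, norm_nonneg _, fun u => ?_⟩
  exact (le_abs_self _).trans (G.le_opNorm u)

theorem aux_pos (K : ℕ) (nrm : (Fin K → ℝ) → ℝ)
    (h0 : ∀ u : Fin K → ℝ, nrm u = 0 ↔ u = 0)
    (hs : ∀ (c : ℝ) (u : Fin K → ℝ), nrm (c • u) = |c| * nrm u)
    (ht : ∀ u w : Fin K → ℝ, nrm (u + w) ≤ nrm u + nrm w) (v : Fin K → ℝ) (hv : v ≠ 0) :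
    0 < sSup ((fun u : Fin K → ℝ => ∑ j, v j * u j) '' {u | nrm u ≤ 1}) := by
  have hneg : ∀ u, nrm (-u) = nrm u := by
    intro u
    have := hs (-1) u
    simpa using this
  have hnn : ∀ u, 0 ≤ nrm u := by
    intro u
    have h1 := ht u (-u)
    have h2 : nrm (u + -u) = 0 := by rw [h0]; simp
    rw [h2, hneg] at h1
    linarith
  have hvp : 0 < nrm v := lt_of_le_of_ne (hnn v) (fun h => hv ((h0 v).1 h.symm))
  obtain ⟨C, hC0, hC⟩ := aux_bdd nrm h0 hs ht
    (∑ j, v j • (LinearMap.proj j : (Fin K → ℝ) →ₗ[ℝ] ℝ))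
  have hbdd : BddAbove ((fun u : Fin K → ℝ => ∑ j, v j * u j) '' {u | nrm u ≤ 1}) := by
    refine ⟨C, ?_⟩
    rintro _ ⟨u, hu, rfl⟩
    have h1 := hC u
    simp only [LinearMap.sum_apply, LinearMap.smul_apply, LinearMap.proj_apply, smul_eq_mul] at h1
    have h2 : C * nrm u ≤ C * 1 := mul_le_mul_of_nonneg_left hu hC0
    simp only
    linarith
  have hmem := le_csSup hbdd ⟨(nrm v)⁻¹ • v, by
    simp only [Set.mem_setOf_eq]
    rw [hs, abs_of_pos (inv_pos.2 hvp), inv_mul_cancel₀ hvp.ne'], rfl⟩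
  refine lt_of_lt_of_le ?_ hmem
  obtain ⟨j, hj⟩ := Function.ne_iff.1 hv
  refine Finset.sum_pos' (fun i _ => ?_) ⟨j, Finset.mem_univ _, ?_⟩
  · simp only [Pi.smul_apply, smul_eq_mul]
    have := mul_self_nonneg (v i)
    have h3 := mul_nonneg (inv_pos.2 hvp).le this
    linarith
  · simp only [Pi.smul_apply, smul_eq_mul]
    have := mul_self_pos.2 hj
    have h3 := mul_pos (inv_pos.2 hvp) this
    linarith

theorem aux_card (N k : ℕ) (hkN : k < N) (g : Fin N → ℝ) :
    ∃ T : Finset (Fin N), T.card = k + 1 ∧ ∀ i ∈ T, g i ≤ (g ∘ Tuple.sort g) ⟨k, hkN⟩ := by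
  refine ⟨(Finset.Iic (⟨k, hkN⟩ : Fin N)).map (Tuple.sort g).toEmbedding, by simp, ?_⟩
  intro i hi
  obtain ⟨j, hj, rfl⟩ := Finset.mem_map.1 hi
  exact Tuple.monotone_sort g (Finset.mem_Iic.1 hj)

theorem aux_shrink (N P k : ℕ) (hP : 0 < P) (e θN : ℝ) (he : 0 < e) (hθ : 0 < θN)
    (hk : e ≤ k + 1) (F : Fin N → Fin P → ℝ) (Q : Fin P → ℝ)
    (hQ : ∀ p, ∃ T : Finset (Fin N), T.card = k + 1 ∧ ∀ i ∈ T, F i p ≤ Q p)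
    (s : ℝ) (r : Fin N → ℝ) (hr : ∀ i, 0 ≤ r i) (hsr : e * s - ∑ i, r i ≥ θN)
    (hF : ∀ i p, F i p ≥ s - r i) :
    ∃ s : ℝ, ∃ r : Fin N → ℝ, 0 ≤ s ∧ (∀ i, 0 ≤ r i) ∧ e * s - ∑ i, r i ≥ θN ∧
      (∀ i p, F i p ≥ s - r i) ∧ ∀ p, Q p ≥ s := by
  have hs0 : ∀ (s : ℝ) (r : Fin N → ℝ), (∀ i, 0 ≤ r i) → e * s - ∑ i, r i ≥ θN → 0 ≤ s := by
    intro s r hr h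
    have h1 : 0 ≤ ∑ i, r i := Finset.sum_nonneg fun i _ => hr i
    have : 0 < e * s := by linarith
    exact (pos_of_mul_pos_right this he.le).le
  haveI : Nonempty (Fin P) := ⟨⟨0, hP⟩⟩
  obtain ⟨p, hp⟩ := Finite.exists_min Q
  by_cases hc : s ≤ Q p
  · exact ⟨s, r, hs0 s r hr hsr, hr, hsr, hF, fun p' => hc.trans (hp p')⟩
  push Not at hc
  have hsum : e * (Q p) - ∑ i, max (r i - (s - Q p)) 0 ≥ θN := by
    obtain ⟨T, hT, hTF⟩ := hQ p
    have h1 : ∑ i ∈ T, (s - Q p) ≤ ∑ i ∈ T, (r i - max (r i - (s - Q p)) 0) := by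
      refine Finset.sum_le_sum fun i hi => ?_
      have h2 := hTF i hi
      have h3 := hF i p
      rw [max_eq_left (by linarith)]
      linarith
    have h2 : ∑ i ∈ T, (r i - max (r i - (s - Q p)) 0) ≤ ∑ i, (r i - max (r i - (s - Q p)) 0) := by
      refine Finset.sum_le_sum_of_subset_of_nonneg (Finset.subset_univ _) fun i _ _ => ?_
      have : max (r i - (s - Q p)) 0 ≤ r i := max_le (by linarith) (hr i)
      linarith
    rw [Finset.sum_const, hT, nsmul_eq_mul] at h1
    have h4 : ∑ i, (r i - max (r i - (s - Q p)) 0) = ∑ i, r i - ∑ i, max (r i - (s - Q p)) 0 :=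
      Finset.sum_sub_distrib _ _
    rw [h4] at h2
    push_cast at h1
    have h3 : e * (s - Q p) ≤ (k + 1) * (s - Q p) :=
      mul_le_mul_of_nonneg_right hk (by linarith)
    linarith
  refine ⟨Q p, fun i => max (r i - (s - Q p)) 0, hs0 _ _ (fun i => le_max_right _ _) hsum,
    fun i => le_max_right _ _, hsum, fun i p' => ?_, hp⟩
  have h1 := hF i p'
  have h2 := le_max_left (r i - (s - Q p)) 0
  simp only
  linarith

theorem stmt_5
    (N K L P : ℕ) (hN : 0 < N) (hK : 0 < K) (hL : 0 < L) (hP : 0 < P)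
    (nrm : (Fin K → ℝ) → ℝ)
    (nrm_eq_zero : ∀ u : Fin K → ℝ, nrm u = 0 ↔ u = 0)
    (nrm_smul : ∀ (c : ℝ) (u : Fin K → ℝ), nrm (c • u) = |c| * nrm u)
    (nrm_triangle : ∀ u w : Fin K → ℝ, nrm (u + w) ≤ nrm u + nrm w)
    (dstar : (Fin K → ℝ) → ℝ)
    (hdstar : ∀ v : Fin K → ℝ,
      dstar v = sSup ((fun u : Fin K → ℝ => ∑ j, v j * u j) '' {u | nrm u ≤ 1}))
    (ξ : Fin N → Fin K → ℝ)
    (a : Fin P → Fin L → ℝ) (b : Fin P → Fin K → ℝ) (hb : ∀ p, b p ≠ 0)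
    (d : Fin P → ℝ)
    (ε θ : ℝ) (hε0 : 0 < ε) (hε1 : ε < 1) (hθ : 0 < θ)
    (k : ℕ) (hk : k = ⌊ε * (N : ℝ)⌋₊) (hkN : k < N)
    (X : Set (Fin L → ℝ))
    (f : Fin N → Fin P → (Fin L → ℝ) → ℝ)
    (hf : ∀ i p x, f i p x =
      ((∑ j, b p j * ξ i j) + d p - ∑ j, a p j * x j) / dstar (b p))
    (q : Fin P → ℝ)
    (hq : ∀ p, q p =
      ((fun i => ∑ j, b p j * ξ i j) ∘ Tuple.sort (fun i => ∑ j, b p j * ξ i j)) ⟨k, hkN⟩)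
    (XSLA : (Fin N → ℝ) → Set (Fin L → ℝ))
    (hXSLA : ∀ κ : Fin N → ℝ, XSLA κ = {x | x ∈ X ∧ ∃ s : ℝ, ∃ r : Fin N → ℝ,
      0 ≤ s ∧ (∀ i, 0 ≤ r i) ∧
      ε * (N : ℝ) * s - ∑ i, r i ≥ θ * (N : ℝ) ∧
      (∀ i p, κ i * f i p x ≥ s - r i) ∧
      ∀ p, (q p + d p - ∑ j, a p j * x j) / dstar (b p) ≥ s})
    (XWCVaR : (Fin P → ℝ) → Set (Fin L → ℝ))
    (hXWCVaR : ∀ w : Fin P → ℝ, XWCVaR w = {x | x ∈ X ∧ ∃ α : Fin N → ℝ, ∃ β τ : ℝ,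
      (∀ i, 0 ≤ α i) ∧
      τ + (1 / ε) * (θ * β + (1 / (N : ℝ)) * ∑ i, α i) ≤ 0 ∧
      (∀ i p, α i ≥ w p * ((∑ j, a p j * x j) - (∑ j, b p j * ξ i j) - d p) - τ) ∧
      ∀ p, β ≥ w p * dstar (b p)})
    :
    XSLA (fun _ => 1) = XWCVaR (fun p => (dstar (b p))⁻¹ / ∑ l, (dstar (b l))⁻¹) := by
  have hD : ∀ p, 0 < dstar (b p) := fun p => by
    rw [hdstar]
    exact aux_pos K nrm nrm_eq_zero nrm_smul nrm_triangle _ (hb p)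
  haveI : Nonempty (Fin P) := ⟨⟨0, hP⟩⟩
  have hNr : (0 : ℝ) < N := by exact_mod_cast hN
  rw [hXSLA, hXWCVaR]
  obtain ⟨W, hWdef⟩ : ∃ W, W = ∑ l, (dstar (b l))⁻¹ := ⟨_, rfl⟩
  have hW : 0 < W := by
    rw [hWdef]
    exact Finset.sum_pos (fun p _ => inv_pos.2 (hD p)) Finset.univ_nonempty
  rw [← hWdef]
  have hw : ∀ i p x, (dstar (b p))⁻¹ / W *
      ((∑ j, a p j * x j) - (∑ j, b p j * ξ i j) - d p) = - (f i p x / W) := by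
    intro i p x
    rw [hf]
    have := (hD p).ne'
    field_simp
    ring
  have hwd : ∀ p, (dstar (b p))⁻¹ / W * dstar (b p) = 1 / W := by
    intro p
    have := (hD p).ne'
    field_simp
  ext x
  simp only [Set.mem_setOf_eq, hw, hwd, one_mul]
  refine and_congr_right fun _ => ⟨?_, ?_⟩
  · rintro ⟨s, r, hs, hr, hsr, hF, -⟩
    refine ⟨fun i => r i / W, 1 / W, -(s / W), fun i => div_nonneg (hr i) hW.le, ?_, ?_,
      fun _ => le_rfl⟩
    · rw [← Finset.sum_div]
      have : -(s / W) + 1 / ε * (θ * (1 / W) + 1 / (N : ℝ) * ((∑ i, r i) / W))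
          = -((ε * N * s - ∑ i, r i - θ * N) / (W * ε * N)) := by
        field_simp
        ring
      rw [this]
      have : 0 ≤ (ε * N * s - ∑ i, r i - θ * N) / (W * ε * N) :=
        div_nonneg (by linarith) (by positivity)
      linarith
    · intro i p
      have h1 := div_le_div_of_nonneg_right (hF i p) hW.le
      rw [sub_div] at h1
      simp only
      linarith
  · rintro ⟨α, β, τ, hα, hm, hF, hβ⟩
    have hβ' := hβ ⟨0, hP⟩
    refine aux_shrink N P k hP (ε * N) (θ * N) (by positivity) (by positivity) ?_
      (fun i p => f i p x) (fun p => (q p + d p - ∑ j, a p j * x j) / dstar (b p)) ?_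
      (-τ * W) (fun i => α i * W) (fun i => mul_nonneg (hα i) hW.le) ?_ ?_
    · rw [hk]
      exact (Nat.lt_floor_add_one _).le
    · intro p
      obtain ⟨T, hT, hTF⟩ := aux_card N k hkN (fun i => ∑ j, b p j * ξ i j)
      refine ⟨T, hT, fun i hi => ?_⟩
      have h1 := hTF i hi
      rw [← hq p] at h1
      simp only [hf]
      exact div_le_div_of_nonneg_right (by linarith) (hD p).le
    · rw [← Finset.sum_mul]
      have h1 : 1 ≤ β * W := by
        have := mul_le_mul_of_nonneg_right hβ' hW.le
        rwa [one_div_mul_cancel hW.ne'] at this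
      have h2 : (τ + 1 / ε * (θ * β + 1 / (N : ℝ) * ∑ i, α i)) * (ε * N * W) ≤ 0 :=
        mul_nonpos_of_nonpos_of_nonneg hm (by positivity)
      have h3 : (τ + 1 / ε * (θ * β + 1 / (N : ℝ) * ∑ i, α i)) * (ε * N * W)
          = τ * ε * N * W + θ * N * (β * W) + (∑ i, α i) * W := by
        field_simp
        ring
      have h4 : θ * N * 1 ≤ θ * N * (β * W) := mul_le_mul_of_nonneg_left h1 (by positivity)
      rw [h3] at h2
      linarith
    · intro i p
      have h1 := mul_le_mul_of_nonneg_right (hF i p) hW.le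
      have h2 : (-(f i p x / W) - τ) * W = - f i p x - τ * W := by
        field_simp
      rw [h2] at h1
      linarith
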